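/- There exists a family of 13 pairwise intersecting squares (of varying sizes, possibly rotated) in the plane such that no set of 3 points hits all of them; hence τ/ν = 4 for this family. -/

import Mathlib

open Classical MeasureTheory
noncomputable section

/-- Points of the Euclidean plane. -/
abbrev Pt := EuclideanSpace ℝ (Fin 2)

/-- A finite point set `H` hits every member of the family `F`. -/
def Hits (H : Finset Pt) (F : Finset (Set Pt)) : Prop := ∀ S ∈ F, ∃ p ∈ H, p ∈ S

/-- The hitting number τ of a family. -/
def hitNum (F : Finset (Set Pt)) : ℕ := sInf {n | ∃ H : Finset Pt, H.card = n ∧ Hits H F}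

/-- The packing number ν of a family. -/
def packNum (F : Finset (Set Pt)) : ℕ :=
  sSup {n | ∃ P ⊆ F, P.card = n ∧ (P : Set (Set Pt)).Pairwise Disjoint}

/-- The maximum degree Δ of a family: the maximum number of members containing a common point. -/
def maxDeg (F : Finset (Set Pt)) : ℕ :=
  sSup {n | ∃ p : Pt, (F.filter fun S => p ∈ S).card = n}

/-- The chromatic number χ of the intersection graph of a family. -/
def chromNum (F : Finset (Set Pt)) : ℕ :=
  sInf {n | ∃ col : Set Pt → ℕ, (∀ S ∈ F, col S < n) ∧
    ∀ S ∈ F, ∀ T ∈ F, S ≠ T → (S ∩ T).Nonempty → col S ≠ col T}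

/-- Hitting-`t`-degeneracy: every nonempty subfamily has a member whose closed
neighbourhood within the subfamily can be hit by at most `t` points. -/
def HitDeg (t : ℕ) (F : Finset (Set Pt)) : Prop :=
  ∀ F' ⊆ F, F'.Nonempty → ∃ S ∈ F',
    hitNum (F'.filter fun T => (T ∩ S).Nonempty) ≤ t

/-- `D`-degeneracy of a family: every nonempty subfamily has a member intersecting
at most `D` other members of the subfamily. -/
def FamDeg (D : ℕ) (F : Finset (Set Pt)) : Prop :=
  ∀ F' ⊆ F, F'.Nonempty → ∃ S ∈ F',
    (F'.filter fun T => T ≠ S ∧ (T ∩ S).Nonempty).card ≤ D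

/-- First coordinate of `x - c` in the rotated (by `θ`) orthonormal frame. -/
def sqForm1 (c : Pt) (θ : ℝ) (x : Pt) : ℝ :=
  Real.cos θ * (x 0 - c 0) + Real.sin θ * (x 1 - c 1)

/-- Second coordinate of `x - c` in the rotated (by `θ`) orthonormal frame. -/
def sqForm2 (c : Pt) (θ : ℝ) (x : Pt) : ℝ :=
  Real.sin θ * (x 0 - c 0) - Real.cos θ * (x 1 - c 1)

/-- The (closed, possibly rotated) square with centre `c`, rotation angle `θ` and side `s`. -/
def sqSet (c : Pt) (θ s : ℝ) : Set Pt :=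
  {x | |sqForm1 c θ x| ≤ s / 2 ∧ |sqForm2 c θ x| ≤ s / 2}

/-- The four vertices of the square with centre `c`, angle `θ` and side `s`. -/
def sqVertices (c : Pt) (θ s : ℝ) : Set Pt :=
  {x | |sqForm1 c θ x| = s / 2 ∧ |sqForm2 c θ x| = s / 2}

/-- A set is a (possibly rotated) unit square. -/
def IsUnitSquare (S : Set Pt) : Prop := ∃ c θ, S = sqSet c θ 1

/-- A set is a (possibly rotated) square of some positive side length. -/
def IsSquareSet (S : Set Pt) : Prop := ∃ c θ s, 0 < s ∧ S = sqSet c θ s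

/-! Eight of the squares form a fan in which no point is common to four; the ninth, the cap, meets
each of them in pairwise disjoint pieces. A hitting set spends a point on the cap, which hits at
most one square of the fan, while every other point hits at most three; since `1 + 2 * 3 < 8`,
three points do not suffice. A square containing all the others changes nothing, so the family may
have any size from nine on.

All coordinates are integers and all slopes come from Pythagorean triples, so that incidences are
decidable, and the emptiness of a triple intersection is certified by one side of each square.
-/

open Function Bornology
open scoped Finset

section Hitting

variable {ι α : Type*}

lemma card_le_add_mul_of_hits [Fintype ι] {f : ι → Set α} {m k : ℕ} {H : Finset α} {q : α}
    (hq : q ∈ H) (hm : #{i | q ∈ f i} ≤ m) (hk : ∀ p ∈ H, #{i | p ∈ f i} ≤ k)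
    (hits : ∀ i, ∃ p ∈ H, p ∈ f i) :
    Fintype.card ι ≤ m + (H.card - 1) * k := by
  have hcover : (Finset.univ : Finset ι) ⊆ H.biUnion fun p => {i | p ∈ f i} := fun i _ => by
    simpa only [Finset.mem_biUnion, Finset.mem_filter_univ] using hits i
  calc Fintype.card ι
      ≤ ∑ p ∈ H, #{i | p ∈ f i} :=
        (Finset.card_le_card hcover).trans Finset.card_biUnion_le
    _ = #{i | q ∈ f i} + ∑ p ∈ H.erase q, #{i | p ∈ f i} :=
        (Finset.add_sum_erase _ _ hq).symm
    _ ≤ m + (H.card - 1) * k := by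
        rw [← Finset.card_erase_of_mem hq]
        exact add_le_add hm
          (Finset.sum_le_card_nsmul _ _ _ fun p hp => hk p (Finset.mem_of_mem_erase hp))

lemma card_filter_mem_le_one [Fintype ι] {A : Set α} {f : ι → Set α}
    (hA : Pairwise (Disjoint on fun i => A ∩ f i)) {p : α} (hp : p ∈ A) : #{i | p ∈ f i} ≤ 1 := by
  refine Finset.card_le_one.2 fun i hi j hj => hA.eq (Set.not_disjoint_iff.2 ⟨p, ?_, ?_⟩)
  · exact ⟨hp, (Finset.mem_filter.1 hi).2⟩
  · exact ⟨hp, (Finset.mem_filter.1 hj).2⟩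

lemma injective_of_pairwise_disjoint_inter {A : Set α} {f : ι → Set α}
    (hA : Pairwise (Disjoint on fun i => A ∩ f i)) (hne : ∀ i, (A ∩ f i).Nonempty) :
    Injective f := fun i j hij =>
  hA.eq (Set.not_disjoint_iff_nonempty_inter.2 (by simpa [hij] using hne j))

lemma notMem_range_of_pairwise_disjoint_inter [Nontrivial ι] {A : Set α} {f : ι → Set α}
    (hA : Pairwise (Disjoint on fun i => A ∩ f i)) (hf : ∀ i j, (f i ∩ f j).Nonempty) :
    A ∉ Set.range f := by
  rintro ⟨i, rfl⟩
  obtain ⟨j, hj⟩ := exists_ne i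
  obtain ⟨p, hpj, hpi⟩ := hf j i
  exact (hA hj).le_bot ⟨⟨hpi, hpj⟩, hpi, hpi⟩

end Hitting

section Enlarging

lemma sqForm1_sq_add_sqForm2_sq (c : Pt) (θ : ℝ) (x : Pt) :
    sqForm1 c θ x ^ 2 + sqForm2 c θ x ^ 2 = dist x c ^ 2 := by
  rw [EuclideanSpace.dist_sq_eq, Fin.sum_univ_two, Real.dist_eq, Real.dist_eq, sq_abs, sq_abs]
  simp only [sqForm1, sqForm2]
  linear_combination ((x 0 - c 0) ^ 2 + (x 1 - c 1) ^ 2) * Real.sin_sq_add_cos_sq θ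

lemma closedBall_subset_sqSet (c : Pt) (θ s : ℝ) : Metric.closedBall c (s / 2) ⊆ sqSet c θ s := by
  intro x hx
  rw [Metric.mem_closedBall] at hx
  have hdist := sqForm1_sq_add_sqForm2_sq c θ x
  constructor
  · exact (abs_le_of_sq_le_sq (by nlinarith [sq_nonneg (sqForm2 c θ x)]) dist_nonneg).trans hx
  · exact (abs_le_of_sq_le_sq (by nlinarith [sq_nonneg (sqForm1 c θ x)]) dist_nonneg).trans hx

lemma sqSet_subset_closedBall (c : Pt) (θ s : ℝ) : sqSet c θ s ⊆ Metric.closedBall c s := by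
  rintro x ⟨h₁, h₂⟩
  have hs : 0 ≤ s / 2 := (abs_nonneg _).trans h₁
  have hdist := sqForm1_sq_add_sqForm2_sq c θ x
  rw [Metric.mem_closedBall]
  refine (abs_le_of_sq_le_sq' ?_ (by linarith)).2
  nlinarith [sq_le_sq' (abs_le.1 h₁).1 (abs_le.1 h₁).2, sq_le_sq' (abs_le.1 h₂).1 (abs_le.1 h₂).2]

lemma IsSquareSet.isBounded {S : Set Pt} (hS : IsSquareSet S) : IsBounded S := by
  obtain ⟨c, θ, s, -, rfl⟩ := hS
  exact Metric.isBounded_closedBall.subset (sqSet_subset_closedBall c θ s)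

lemma exists_isSquareSet_superset {B : Set Pt} (hB : IsBounded B) :
    ∃ S, IsSquareSet S ∧ B ⊆ S := by
  obtain ⟨r, hr, hBr⟩ := hB.subset_closedBall_lt 0 0
  refine ⟨sqSet 0 0 (2 * r), ⟨0, 0, 2 * r, by positivity, rfl⟩, hBr.trans ?_⟩
  simpa only [mul_div_cancel_left₀ r two_ne_zero] using closedBall_subset_sqSet 0 0 (2 * r)

lemma exists_isSquareSet_ssuperset {B : Set Pt} (hB : IsBounded B) :
    ∃ S, IsSquareSet S ∧ B ⊂ S := by
  obtain ⟨p, hp⟩ : ∃ p, p ∉ B := by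
    by_contra! hall
    exact NormedSpace.unbounded_univ ℝ Pt (Set.eq_univ_of_forall hall ▸ hB)
  obtain ⟨S, hS, hpS⟩ := exists_isSquareSet_superset (hB.insert p)
  exact ⟨S, hS, (Set.ssubset_insert hp).trans_subset hpS⟩

/-- A family of distinct, pairwise intersecting squares whose hitting number is `t`. -/
structure IsIntersectingSquareFamily {ι : Type*} (f : ι → Set Pt) (t : ℕ) : Prop where
  injective : Injective f
  isSquareSet : ∀ i, IsSquareSet (f i)
  inter_nonempty : ∀ i j, (f i ∩ f j).Nonempty
  le_card : ∀ H : Finset Pt, (∀ i, ∃ p ∈ H, p ∈ f i) → t ≤ H.card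
  exists_hits : ∃ H : Finset Pt, H.card = t ∧ ∀ i, ∃ p ∈ H, p ∈ f i

lemma IsIntersectingSquareFamily.exists_cons {n t : ℕ} [NeZero n] {f : Fin n → Set Pt}
    (hf : IsIntersectingSquareFamily f t) :
    ∃ S : Set Pt, IsIntersectingSquareFamily (Fin.cons S f : Fin (n + 1) → Set Pt) t := by
  obtain ⟨S, hS, hfS⟩ := exists_isSquareSet_ssuperset
    (isBounded_iUnion.2 fun i => (hf.isSquareSet i).isBounded)
  have hsub : ∀ i, f i ⊆ S := fun i => (Set.subset_iUnion f i).trans hfS.subset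
  have hne : ∀ i, (f i).Nonempty := fun i => (hf.inter_nonempty i i).left
  have hSf : ∀ i, (S ∩ f i).Nonempty := fun i => (hne i).mono (Set.subset_inter (hsub i) le_rfl)
  have hinj : Injective (Fin.cons S f : Fin (n + 1) → Set Pt) := by
    refine Fin.cons_injective_iff.2 ⟨?_, hf.injective⟩
    rintro ⟨i, rfl⟩
    exact hfS.not_subset (Set.subset_iUnion f i)
  obtain ⟨H, hcard, hits⟩ := hf.exists_hits
  obtain ⟨p, hp, hp0⟩ := hits 0
  exact ⟨S, hinj, Fin.cases hS hf.isSquareSet,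
    Fin.cases (Fin.cases (by simpa using (hSf 0).left) hSf)
      fun i => Fin.cases (by simpa [Set.inter_comm] using hSf i) (hf.inter_nonempty i),
    fun H hH => hf.le_card H fun i => hH i.succ,
    H, hcard, Fin.cases ⟨p, hp, hsub 0 hp0⟩ hits⟩

end Enlarging

section IntegerData

/-- The point of the plane with the given integer coordinates. -/
def intPt (x : ℤ × ℤ) : Pt := !₂[(x.1 : ℝ), (x.2 : ℝ)]

lemma intPt_injective : Injective intPt := fun x y h => by
  have h₀ := congrArg (fun p : Pt => p 0) h
  have h₁ := congrArg (fun p : Pt => p 1) h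
  simp only [intPt, PiLp.toLp_apply, Matrix.cons_val_zero, Matrix.cons_val_one,
    Int.cast_inj] at h₀ h₁
  exact Prod.ext h₀ h₁

/-- The closed half-plane `u * x + v * y ≤ w` with integer coefficients. -/
structure IntHalfPlane where
  u : ℤ
  v : ℤ
  w : ℤ

namespace IntHalfPlane

/-- The points of the plane in the half-plane. -/
def region (P : IntHalfPlane) : Set Pt := {p | (P.u : ℝ) * p 0 + P.v * p 1 ≤ P.w}

/-- The determinant of the outer normals of two half-planes. -/
def det (P Q : IntHalfPlane) : ℤ := P.u * Q.v - P.v * Q.u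

/-- Cramer's certificate that three half-planes have no common point: weighted by the
determinants of the other two normals, the left-hand sides of the three inequalities add up to
zero and their right-hand sides to a negative number. -/
def IsInfeasible (P Q R : IntHalfPlane) : Prop :=
  0 ≤ Q.det R ∧ 0 ≤ R.det P ∧ 0 ≤ P.det Q ∧ Q.det R * P.w + R.det P * Q.w + P.det Q * R.w < 0

instance (P Q R : IntHalfPlane) : Decidable (P.IsInfeasible Q R) :=
  inferInstanceAs (Decidable (_ ∧ _))

lemma IsInfeasible.inter_eq_empty {P Q R : IntHalfPlane} (h : P.IsInfeasible Q R) :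
    P.region ∩ Q.region ∩ R.region = ∅ := by
  refine Set.eq_empty_of_forall_notMem fun p ⟨⟨hP, hQ⟩, hR⟩ => ?_
  obtain ⟨hQR, hRP, hPQ, hneg⟩ := h
  have hP' := mul_le_mul_of_nonneg_left hP (Int.cast_nonneg (R := ℝ) hQR)
  have hQ' := mul_le_mul_of_nonneg_left hQ (Int.cast_nonneg (R := ℝ) hRP)
  have hR' := mul_le_mul_of_nonneg_left hR (Int.cast_nonneg (R := ℝ) hPQ)
  have hneg' := (Int.cast_lt (R := ℝ)).2 hneg
  simp only [det] at hP' hQ' hR' hneg'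
  push_cast at hP' hQ' hR' hneg'
  linarith

end IntHalfPlane

/-- A square with integer centre `(a, b)` and half side `h`, one of whose axes has the rational
direction `(c / r, s / r)`. -/
structure IntSquare where
  c : ℤ
  s : ℤ
  r : ℤ
  a : ℤ
  b : ℤ
  h : ℤ
  sq_add_sq : c ^ 2 + s ^ 2 = r ^ 2 := by decide
  r_pos : 0 < r := by decide
  h_pos : 0 < h := by decide

lemma exists_cos_eq_sin_eq {x y : ℝ} (h : x ^ 2 + y ^ 2 = 1) :
    ∃ θ : ℝ, Real.cos θ = x ∧ Real.sin θ = y := by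
  have hnorm : ‖(⟨x, y⟩ : ℂ)‖ = 1 := by
    rw [Complex.norm_def, Complex.normSq_mk, ← sq, ← sq, h, Real.sqrt_one]
  obtain ⟨θ, hθ⟩ := (Complex.norm_eq_one_iff _).1 hnorm
  exact ⟨θ, by rw [← Complex.exp_ofReal_mul_I_re, hθ], by rw [← Complex.exp_ofReal_mul_I_im, hθ]⟩

namespace IntSquare

/-- The points of the plane in the square. -/
def region (q : IntSquare) : Set Pt :=
  {p | |(q.c : ℝ) * (p 0 - q.a) + q.s * (p 1 - q.b)| ≤ q.r * q.h ∧
    |(q.s : ℝ) * (p 0 - q.a) - q.c * (p 1 - q.b)| ≤ q.r * q.h}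

/-- Membership of an integer point in a square, expressed over the integers so that it is
decidable. -/
def Contains (q : IntSquare) (x : ℤ × ℤ) : Prop :=
  |q.c * (x.1 - q.a) + q.s * (x.2 - q.b)| ≤ q.r * q.h ∧
    |q.s * (x.1 - q.a) - q.c * (x.2 - q.b)| ≤ q.r * q.h

instance (q : IntSquare) (x : ℤ × ℤ) : Decidable (q.Contains x) :=
  inferInstanceAs (Decidable (_ ∧ _))

lemma intPt_mem_region {q : IntSquare} {x : ℤ × ℤ} (h : q.Contains x) : intPt x ∈ q.region := by
  simp only [region, intPt, Set.mem_ofPred_eq, Matrix.cons_val_zero, Matrix.cons_val_one]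
  exact_mod_cast h

lemma isSquareSet_region (q : IntSquare) : IsSquareSet q.region := by
  have hr : (0 : ℝ) < q.r := by exact_mod_cast q.r_pos
  have hcs : (q.c : ℝ) ^ 2 + (q.s : ℝ) ^ 2 = (q.r : ℝ) ^ 2 := by exact_mod_cast q.sq_add_sq
  obtain ⟨θ, hcos, hsin⟩ := exists_cos_eq_sin_eq (x := q.c / q.r) (y := q.s / q.r) (by
    rw [div_pow, div_pow, ← add_div, hcs, div_self (pow_ne_zero 2 hr.ne')])
  have hscale : ∀ u : ℝ, |u / q.r| ≤ 2 * q.h / 2 ↔ |u| ≤ q.r * q.h := fun u => by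
    rw [abs_div, abs_of_pos hr, div_le_iff₀ hr, mul_div_cancel_left₀ _ two_ne_zero, mul_comm]
  refine ⟨intPt (q.a, q.b), θ, 2 * q.h, by exact_mod_cast mul_pos two_pos q.h_pos, ?_⟩
  ext p
  simp only [region, sqSet, sqForm1, sqForm2, intPt, hcos, hsin, Set.mem_ofPred_eq,
    PiLp.toLp_apply, Matrix.cons_val_zero, Matrix.cons_val_one, div_mul_eq_mul_div, ← add_div,
    ← sub_div, hscale]

/-- The four half-planes bounded by the sides of a square. -/
def side (q : IntSquare) : Fin 4 → IntHalfPlane :=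
  ![⟨q.c, q.s, q.r * q.h + (q.c * q.a + q.s * q.b)⟩,
    ⟨-q.c, -q.s, q.r * q.h - (q.c * q.a + q.s * q.b)⟩,
    ⟨q.s, -q.c, q.r * q.h + (q.s * q.a - q.c * q.b)⟩,
    ⟨-q.s, q.c, q.r * q.h - (q.s * q.a - q.c * q.b)⟩]

lemma region_subset_side (q : IntSquare) (k : Fin 4) : q.region ⊆ (q.side k).region := by
  rintro p ⟨h₁, h₂⟩
  rw [abs_le] at h₁ h₂
  fin_cases k
  all_goals
    simp only [IntHalfPlane.region, side, Fin.zero_eta, Fin.mk_one, Fin.reduceFinMk,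
      Matrix.cons_val, Set.mem_ofPred_eq]
    push_cast
    linarith

/-- One side of each of three squares certifies that they have no common point. The certificate
requires the three outer normals in counterclockwise order, so it depends on the order of the
squares. -/
def HasInfeasibleSides (A B C : IntSquare) : Prop :=
  ∃ i j k, (A.side i).IsInfeasible (B.side j) (C.side k)

instance (A B C : IntSquare) : Decidable (A.HasInfeasibleSides B C) :=
  inferInstanceAs (Decidable (∃ _, _))

lemma HasInfeasibleSides.inter_eq_empty {A B C : IntSquare} (h : A.HasInfeasibleSides B C) :
    A.region ∩ B.region ∩ C.region = ∅ := by
  obtain ⟨i, j, k, hijk⟩ := h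
  exact Set.subset_empty_iff.1 (hijk.inter_eq_empty ▸ Set.inter_subset_inter
    (Set.inter_subset_inter (A.region_subset_side i) (B.region_subset_side j))
    (C.region_subset_side k))

end IntSquare

end IntegerData

section NineSquares

/-- The eight squares of the fan, no four of which have a common point, listed in the order in
which they meet `capSquare`. -/
def fanSquares : Fin 8 → IntSquare :=
  ![.mk 28 45 53 (-60) 5 35, .mk 15 8 17 (-45) (-2) 26, .mk 7 24 25 (-43) 6 26,
    .mk 5 12 13 (-2) 5 14, .mk 12 5 13 (-2) 2 14, .mk 1 0 1 0 4 13,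
    .mk 12 5 13 17 (-57) 48, .mk 35 12 37 21 (-56) 48]

/-- The square that meets the squares of the fan in pairwise disjoint pieces. -/
def capSquare : IntSquare := .mk 12 35 37 21 63 48

/-- The cap followed by the fan. -/
def nineSquares : Fin 9 → IntSquare := Fin.cons capSquare fanSquares

/-- Every two of the nine squares share one of these points. -/
def commonPoints : List (ℤ × ℤ) :=
  [(-45, -31), (-39, -27), (-20, 9), (-13, 16), (-13, 15), (-39, 33), (-20, -2), (-13, -8),
    (-36, 32), (-17, 3), (-29, -25), (-19, 26), (3, -12), (-9, 23), (-9, -16), (3, 19), (11, -9),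
    (8, 17), (43, 5), (48, 3)]

lemma nineSquares_inter_nonempty (i j : Fin 9) :
    ((nineSquares i).region ∩ (nineSquares j).region).Nonempty := by
  have hcommon : ∀ i j, ∃ x ∈ commonPoints,
      (nineSquares i).Contains x ∧ (nineSquares j).Contains x := by decide +kernel
  obtain ⟨x, -, hi, hj⟩ := hcommon i j
  exact ⟨intPt x, IntSquare.intPt_mem_region hi, IntSquare.intPt_mem_region hj⟩

lemma pairwise_disjoint_capSquare_inter_fanSquares :
    Pairwise (Disjoint on fun i => capSquare.region ∩ (fanSquares i).region) := by
  have hsides : ∀ i j, i < j → capSquare.HasInfeasibleSides (fanSquares i) (fanSquares j) := by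
    decide +kernel
  refine (pairwise_disjoint_on _).2 fun i j hij => Set.disjoint_iff_inter_eq_empty.2 ?_
  rw [← Set.inter_inter_distrib_left, ← Set.inter_assoc]
  exact (hsides i j hij).inter_eq_empty

lemma card_filter_mem_fanSquares_le (p : Pt) : #{i | p ∈ (fanSquares i).region} ≤ 3 := by
  -- A certificate may be rotated cyclically, so it suffices to search with the least index first.
  have hsides : ∀ T ∈ (Finset.univ : Finset (Fin 8)).powersetCard 4,
      ∃ i ∈ T, ∃ j ∈ T, ∃ k ∈ T, i < j ∧ i < k ∧
        (fanSquares i).HasInfeasibleSides (fanSquares j) (fanSquares k) := by decide +kernel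
  by_contra! hcard
  obtain ⟨T, hTp, hT⟩ := Finset.exists_subset_card_eq (Nat.succ_le_of_lt hcard)
  obtain ⟨i, hi, j, hj, k, hk, -, -, hijk⟩ :=
    hsides T (Finset.mem_powersetCard.2 ⟨Finset.subset_univ T, hT⟩)
  have hmem : ∀ l ∈ T, p ∈ (fanSquares l).region := fun l hl => (Finset.mem_filter.1 (hTp hl)).2
  exact hijk.inter_eq_empty.subset ⟨⟨hmem i hi, hmem j hj⟩, hmem k hk⟩

lemma nineSquares_region_injective : Injective fun i => (nineSquares i).region := by
  have hcons : (fun i => (nineSquares i).region) =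
      Fin.cons capSquare.region fun i => (fanSquares i).region :=
    funext (Fin.cases rfl fun _ => rfl)
  have hcap := pairwise_disjoint_capSquare_inter_fanSquares
  rw [hcons, Fin.cons_injective_iff]
  exact ⟨notMem_range_of_pairwise_disjoint_inter hcap
      fun i j => nineSquares_inter_nonempty i.succ j.succ,
    injective_of_pairwise_disjoint_inter hcap fun i => nineSquares_inter_nonempty 0 i.succ⟩

lemma four_le_card_of_hits_nineSquares {H : Finset Pt}
    (hits : ∀ i, ∃ p ∈ H, p ∈ (nineSquares i).region) : 4 ≤ H.card := by
  obtain ⟨q, hq, hqcap⟩ := hits 0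
  have hle := card_le_add_mul_of_hits hq
    (card_filter_mem_le_one pairwise_disjoint_capSquare_inter_fanSquares hqcap)
    (fun p _ => card_filter_mem_fanSquares_le p) fun i => hits i.succ
  rw [Fintype.card_fin] at hle
  omega

lemma exists_card_eq_four_hits_nineSquares :
    ∃ H : Finset Pt, H.card = 4 ∧ ∀ i, ∃ p ∈ H, p ∈ (nineSquares i).region := by
  let X : Finset (ℤ × ℤ) := {(-39, -27), (-17, 3), (-9, -16), (8, 17)}
  have hcontains : ∀ i, ∃ x ∈ X, (nineSquares i).Contains x := by decide +kernel
  refine ⟨X.map ⟨intPt, intPt_injective⟩, Finset.card_map _, fun i => ?_⟩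
  obtain ⟨x, hx, hi⟩ := hcontains i
  exact ⟨intPt x, Finset.mem_map_of_mem _ hx, IntSquare.intPt_mem_region hi⟩

lemma isIntersectingSquareFamily_nineSquares :
    IsIntersectingSquareFamily (fun i => (nineSquares i).region) 4 where
  injective := nineSquares_region_injective
  isSquareSet i := (nineSquares i).isSquareSet_region
  inter_nonempty := nineSquares_inter_nonempty
  le_card _ := four_le_card_of_hits_nineSquares
  exists_hits := exists_card_eq_four_hits_nineSquares

end NineSquares

lemma exists_isIntersectingSquareFamily_four {n : ℕ} (hn : 9 ≤ n) :
    ∃ f : Fin n → Set Pt, IsIntersectingSquareFamily f 4 := by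
  induction n, hn using Nat.le_induction with
  | base => exact ⟨_, isIntersectingSquareFamily_nineSquares⟩
  | succ n hn ih =>
    obtain ⟨f, hf⟩ := ih
    have : NeZero n := ⟨by omega⟩
    obtain ⟨S, hS⟩ := hf.exists_cons
    exact ⟨_, hS⟩

theorem stmt_17_general {n : ℕ} (hn : 9 ≤ n) : ∃ f : Fin n → Set Pt, Function.Injective f ∧
    (∀ i, IsSquareSet (f i)) ∧
    (∀ i j, (f i ∩ f j).Nonempty) ∧
    (∀ H : Finset Pt, (∀ i, ∃ p ∈ H, p ∈ f i) → 4 ≤ H.card) ∧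
    (∃ H : Finset Pt, H.card = 4 ∧ ∀ i, ∃ p ∈ H, p ∈ f i) := by
  obtain ⟨f, hf⟩ := exists_isIntersectingSquareFamily_four hn
  exact ⟨f, hf.injective, hf.isSquareSet, hf.inter_nonempty, hf.le_card, hf.exists_hits⟩

theorem stmt_17 : ∃ f : Fin 13 → Set Pt, Function.Injective f ∧
    (∀ i, IsSquareSet (f i)) ∧
    (∀ i j, (f i ∩ f j).Nonempty) ∧
    (∀ H : Finset Pt, (∀ i, ∃ p ∈ H, p ∈ f i) → 4 ≤ H.card) ∧
    (∃ H : Finset Pt, H.card = 4 ∧ ∀ i, ∃ p ∈ H, p ∈ f i) :=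
  stmt_17_general (by norm_num)
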